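/- Let R be a commutative ring, let k ≥ 2 and n ≥ 1, and let T : (Fin n)^k → R be an order-k tensor of format n × ⋯ × n. Suppose there exist subsets U_1, …, U_k ⊆ Fin n such that T(u_1, …, u_k) = 0 whenever u_j ∈ U_j for every j ∈ {1,…,k}, and such that |U_1| > Σ_{j=2}^{k} (n − |U_j|). Then the combinatorial hyperdeterminant of T is zero. -/

import Mathlib

/-- The combinatorial hyperdeterminant of an order-`k` tensor `T` of format `n × ⋯ × n`:
`det T = Σ_{σ₂,…,σ_k ∈ S_n} sign(σ₂)⋯sign(σ_k) Π_{i} T(i, σ₂(i), …, σ_k(i))`.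
We sum over tuples `σ : Fin k → Perm (Fin n)` whose first component is the identity. -/
noncomputable def hyperdet {R : Type*} [CommRing R] {k n : ℕ} [NeZero k]
    (T : (Fin k → Fin n) → R) : R :=
  ∑ σ ∈ Finset.univ.filter (fun σ : Fin k → Equiv.Perm (Fin n) => σ 0 = 1),
    (∏ j, (Equiv.Perm.sign (σ j) : ℤ)) • ∏ i : Fin n, T (fun j => σ j i)

/-- If an order-`k` tensor `T` (`k ≥ 2`, `n ≥ 1`) vanishes on all index
tuples `(u₁,…,u_k)` with `u_j ∈ U_j` for all `j`, and `|U₁| > Σ_{j≥2} (n − |U_j|)`, then the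
combinatorial hyperdeterminant of `T` is zero. -/
theorem stmt9 {R : Type*} [CommRing R] (k n : ℕ) [NeZero k] (hk : 2 ≤ k) (hn : 1 ≤ n)
    (T : (Fin k → Fin n) → R) (U : Fin k → Finset (Fin n))
    (hzero : ∀ u : Fin k → Fin n, (∀ j, u j ∈ U j) → T u = 0)
    (hcard : ∑ j ∈ Finset.univ.erase (0 : Fin k), (n - (U j).card) < (U 0).card) :
    hyperdet T = 0 := by
  unfold hyperdet
  apply Finset.sum_eq_zero
  intro σ hσ
  have h0 : σ 0 = 1 := (Finset.mem_filter.mp hσ).2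
  have key : ∃ i ∈ U 0, i ∉ (Finset.univ.erase (0 : Fin k)).biUnion
      (fun j => (U j)ᶜ.image (σ j).symm) := by
    by_contra hcon
    push Not at hcon
    have h1 := Finset.card_le_card (show U 0 ⊆ _ from hcon)
    have h2 : ((Finset.univ.erase (0 : Fin k)).biUnion
        (fun j => (U j)ᶜ.image (σ j).symm)).card
        ≤ ∑ j ∈ Finset.univ.erase (0 : Fin k), (n - (U j).card) := by
      refine Finset.card_biUnion_le.trans (Finset.sum_le_sum fun j _ => ?_)
      refine Finset.card_image_le.trans ?_
      rw [Finset.card_compl, Fintype.card_fin]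
    omega
  obtain ⟨i, hi, hni⟩ := key
  have hT : T (fun j => σ j i) = 0 := by
    apply hzero
    intro j
    by_cases hj : j = 0
    · subst hj
      simpa [h0] using hi
    · by_contra hne
      apply hni
      refine Finset.mem_biUnion.mpr ⟨j, by simp [hj], ?_⟩
      exact Finset.mem_image.mpr ⟨σ j i, by simpa using hne, by simp⟩
  rw [Finset.prod_eq_zero (Finset.mem_univ i) hT, smul_zero]
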